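/- arXiv:2006.00905 — 3 statements merged into one kernel-verified Lean document; each statement's English description precedes it below -/
import Mathlib

section
/- Let d ≥ 1 be an integer, let y be a permutation of I_d = {1,…,d}, and let ε : Î_d → {±1} be an odd sign function (ε(−i) = −ε(i) for all i). Define 𝐲 : Î_d → Î_d by 𝐲(i) = ε(i) · y^{ε(i)}(i) · ε(y^{ε(i)}(i)), where y is extended oddly to Î_d. Then 𝐲(−𝐲(i)) = −i for every i ∈ Î_d, and consequently 𝐲 is a bijection of Î_d. -/
/-- `Î_d`: the set of integers `i` with `1 ≤ |i| ≤ d`. -/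
def IdxHat (d : ℤ) : Set ℤ := {i : ℤ | 1 ≤ |i| ∧ |i| ≤ d}

/-- `y^s(i)` for positive `i`: `y i` if `s = 1`, `y⁻¹ i` if `s = -1`. -/
def pApp (y : Equiv.Perm ℤ) (s i : ℤ) : ℤ := if s = 1 then y i else y.symm i

/-- The odd extension of `y^s` to `Î_d`. -/
def sApp (y : Equiv.Perm ℤ) (s i : ℤ) : ℤ :=
  if 0 < i then pApp y s i else -pApp y s (-i)

/-- `𝐲(i) = ε(i) · y^{ε(i)}(i) · ε(y^{ε(i)}(i))`. -/
def bY (y : Equiv.Perm ℤ) (ε : ℤ → ℤ) (i : ℤ) : ℤ :=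
  ε i * sApp y (ε i) i * ε (sApp y (ε i) i)

/-!
Write `a = ε(i)`, `j = y^a(i)`, `b = ε(j)`, so that `𝐲(i) = a b j`. Oddness of `ε` gives
`ε(-a b j) = -a b b = -a`, hence the exponent of `y` flips and `y^{-a}(-a b j) = -a b i`, whose sign
is `-b`; multiplying out, `𝐲(-𝐲(i)) = (-a)(-a b i)(-b) = -i`. Thus `i ↦ -𝐲(-i)` is inverse to `𝐲`.
-/

theorem bijOn_of_apply_neg_apply {α : Type*} [InvolutiveNeg α] {f : α → α} {T : Set α}
    (hneg : ∀ i ∈ T, -i ∈ T) (hmaps : Set.MapsTo f T T) (hf : ∀ i ∈ T, f (-f i) = -i) :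
    Set.BijOn f T T := by
  refine Set.InvOn.bijOn (f' := fun i ↦ -f (-i)) ⟨fun i hi ↦ ?_, fun i hi ↦ ?_⟩ hmaps
    fun i hi ↦ hneg _ (hmaps (hneg i hi))
  · simp only [hf i hi, neg_neg]
  · simp only [hf (-i) (hneg i hi), neg_neg]

theorem apply_mul_of_isUnit_of_apply_neg {f : ℤ → ℤ} {c i : ℤ} (hc : IsUnit c)
    (hf : f (-i) = -f i) : f (c * i) = c * f i := by
  rcases Int.isUnit_iff.1 hc with rfl | rfl
  · simp only [one_mul]
  · simp only [neg_one_mul, hf]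

section SignedPowers

variable {y : Equiv.Perm ℤ} {S : Set ℤ} {s i : ℤ}

theorem pApp_mapsTo (hy : Set.BijOn y S S) (s : ℤ) : Set.MapsTo (pApp y s) S S := by
  intro i hi
  unfold pApp
  split_ifs
  · exact hy.mapsTo hi
  · exact hy.equiv_symm.mapsTo hi

theorem pApp_neg_pApp (y : Equiv.Perm ℤ) (hs : IsUnit s) (i : ℤ) :
    pApp y (-s) (pApp y s i) = i := by
  rcases Int.isUnit_iff.1 hs with rfl | rfl <;> simp [pApp]

theorem sApp_eq_sign_mul_pApp (y : Equiv.Perm ℤ) (s : ℤ) (hi : i ≠ 0) :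
    sApp y s i = i.sign * pApp y s |i| := by
  rcases hi.lt_or_gt with h | h
  · rw [sApp, if_neg h.not_gt, Int.sign_eq_neg_one_of_neg h, abs_of_neg h, neg_one_mul]
  · rw [sApp, if_pos h, Int.sign_eq_one_of_pos h, abs_of_pos h, one_mul]

theorem sApp_neg (y : Equiv.Perm ℤ) (s : ℤ) (hi : i ≠ 0) : sApp y s (-i) = -sApp y s i := by
  rw [sApp_eq_sign_mul_pApp y s hi, sApp_eq_sign_mul_pApp y s (neg_ne_zero.2 hi), Int.sign_neg,
    abs_neg, neg_mul]

theorem ne_zero_of_abs_mem (hS : S ⊆ Set.Ioi 0) (hi : |i| ∈ S) : i ≠ 0 :=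
  abs_pos.1 (hS hi)

theorem abs_sApp (hS : S ⊆ Set.Ioi 0) (hy : Set.BijOn y S S) (s : ℤ) (hi : |i| ∈ S) :
    |sApp y s i| = pApp y s |i| := by
  have hi0 := ne_zero_of_abs_mem hS hi
  rw [sApp_eq_sign_mul_pApp y s hi0, abs_mul, Int.abs_sign_of_ne_zero hi0, one_mul,
    abs_of_pos (hS (pApp_mapsTo hy s hi))]

theorem sApp_mapsTo (hS : S ⊆ Set.Ioi 0) (hy : Set.BijOn y S S) (s : ℤ) :
    Set.MapsTo (sApp y s) (abs ⁻¹' S) (abs ⁻¹' S) := by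
  intro i hi
  rw [Set.mem_preimage, abs_sApp hS hy s hi]
  exact pApp_mapsTo hy s hi

theorem sApp_neg_sApp (hS : S ⊆ Set.Ioi 0) (hy : Set.BijOn y S S) (hs : IsUnit s)
    (hi : |i| ∈ S) : sApp y (-s) (sApp y s i) = i := by
  have hsign : (sApp y s i).sign = i.sign := by
    rw [sApp_eq_sign_mul_pApp y s (ne_zero_of_abs_mem hS hi), Int.sign_mul, Int.sign_sign,
      Int.sign_eq_one_of_pos (hS (pApp_mapsTo hy s hi)), mul_one]
  rw [sApp_eq_sign_mul_pApp y (-s) (ne_zero_of_abs_mem hS (sApp_mapsTo hS hy s hi)), hsign,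
    abs_sApp hS hy s hi, pApp_neg_pApp y hs, Int.sign_mul_abs]

variable {ε : ℤ → ℤ}

theorem bY_mapsTo (hS : S ⊆ Set.Ioi 0) (hy : Set.BijOn y S S)
    (hε : ∀ i ∈ abs ⁻¹' S, IsUnit (ε i)) :
    Set.MapsTo (bY y ε) (abs ⁻¹' S) (abs ⁻¹' S) := by
  intro i hi
  have hj := sApp_mapsTo hS hy (ε i) hi
  rw [Set.mem_preimage, bY, abs_mul, abs_mul, Int.isUnit_iff_abs_eq.1 (hε i hi),
    Int.isUnit_iff_abs_eq.1 (hε _ hj), one_mul, mul_one]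
  exact hj

theorem bY_neg_bY (hS : S ⊆ Set.Ioi 0) (hy : Set.BijOn y S S)
    (hεodd : ∀ i ∈ abs ⁻¹' S, ε (-i) = -ε i) (hε : ∀ i ∈ abs ⁻¹' S, IsUnit (ε i))
    (hi : |i| ∈ S) : bY y ε (-bY y ε i) = -i := by
  have hj := sApp_mapsTo hS hy (ε i) hi
  have hji := sApp_neg_sApp hS hy (hε i hi) hi
  have hbY : bY y ε i = ε i * sApp y (ε i) i * ε (sApp y (ε i) i) := rfl
  set j := sApp y (ε i) i
  have ha := Int.isUnit_mul_self (hε i hi)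
  have hb := Int.isUnit_mul_self (hε j hj)
  have hc : IsUnit (-(ε i * ε j)) := ((hε i hi).mul (hε j hj)).neg
  have hneg : -bY y ε i = -(ε i * ε j) * j := by rw [hbY]; ring
  have hεj : ε (-(ε i * ε j) * j) = -ε i := by
    rw [apply_mul_of_isUnit_of_apply_neg hc (hεodd j hj)]
    linear_combination (-ε i) * hb
  have hsApp : sApp y (-ε i) (-(ε i * ε j) * j) = -(ε i * ε j) * i := by
    rw [apply_mul_of_isUnit_of_apply_neg hc (sApp_neg y _ (ne_zero_of_abs_mem hS hj)), hji]
  have hεi : ε (-(ε i * ε j) * i) = -ε j := by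
    rw [apply_mul_of_isUnit_of_apply_neg hc (hεodd i hi)]
    linear_combination (-ε j) * ha
  calc bY y ε (-bY y ε i) = -ε i * (-(ε i * ε j) * i) * -ε j := by
        rw [hneg, bY, hεj, hsApp, hεi]
    _ = -((ε i * ε i) * (ε j * ε j) * i) := by ring
    _ = -i := by rw [ha, hb, one_mul, one_mul]

end SignedPowers

theorem stmt3_general {S : Set ℤ} (hS : S ⊆ Set.Ioi 0) {y : Equiv.Perm ℤ}
    (hy : Set.BijOn y S S) {ε : ℤ → ℤ} (hεodd : ∀ i ∈ abs ⁻¹' S, ε (-i) = -ε i)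
    (hε : ∀ i ∈ abs ⁻¹' S, IsUnit (ε i)) :
    (∀ i ∈ abs ⁻¹' S, bY y ε (-bY y ε i) = -i) ∧
      Set.BijOn (bY y ε) (abs ⁻¹' S) (abs ⁻¹' S) := by
  have hinv : ∀ i ∈ abs ⁻¹' S, bY y ε (-bY y ε i) = -i := fun i hi ↦
    bY_neg_bY hS hy hεodd hε hi
  have hneg : ∀ i ∈ abs ⁻¹' S, -i ∈ abs ⁻¹' S := fun i hi ↦ by
    rwa [Set.mem_preimage, abs_neg]
  exact ⟨hinv, bijOn_of_apply_neg_apply hneg (bY_mapsTo hS hy hε) hinv⟩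

theorem stmt3 (d : ℤ) (hd : 1 ≤ d) (y : Equiv.Perm ℤ)
    (hy : Set.BijOn y (Set.Icc 1 d) (Set.Icc 1 d))
    (ε : ℤ → ℤ) (hεodd : ∀ i : ℤ, ε (-i) = -ε i)
    (hε : ∀ i ∈ IdxHat d, ε i = 1 ∨ ε i = -1) :
    (∀ i ∈ IdxHat d, bY y ε (-(bY y ε i)) = -i)
    ∧ Set.BijOn (bY y ε) (IdxHat d) (IdxHat d) :=
  stmt3_general (S := Set.Icc 1 d) (fun _ hi ↦ zero_lt_one.trans_le hi.1) hy
    (fun i _ ↦ hεodd i) fun i hi ↦ Int.isUnit_iff.2 (hε i hi)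
end

section
/- (Lemma on restoring an origami from its double.) Let d ≥ 1 and let 𝐘 be a permutation of Î_d. Suppose there exist n ≥ 1 and nonempty lists L_j = (a_{j,1}, …, a_{j,m_j}) of elements of Î_d for j = 1,…,n such that the 2n sets supp(L_1), −supp(L_1), …, supp(L_n), −supp(L_n) are pairwise disjoint and their union is all of Î_d, and such that 𝐘 is the product of the disjoint cycles c_j = (a_{j,1} a_{j,2} … a_{j,m_j}) and c_j' = (−a_{j,1} −a_{j,2} … −a_{j,m_j})^{−1} for j = 1,…,n (i.e. 𝐘(a_{j,k}) = a_{j,k+1} and 𝐘(−a_{j,k+1}) = −a_{j,k} cyclically, and these cycles define 𝐘 on all of Î_d). Let y be the permutation of I_d that is the product of the disjoint cycles (|a_{j,1}| |a_{j,2}| … |a_{j,m_j}|) for j = 1,…,n, and define ε : I_d → {±1} by ε(i) = 1 if i appears in some list L_j and ε(i) = −1 if −i appears in some list L_j, extended oddly to Î_d. Then for every i ∈ Î_d, 𝐘(i) = ε(i) · y^{ε(i)}(i) · ε(y^{ε(i)}(i)), where y is extended oddly to Î_d. -/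
/-! Since `ε` is odd and equal to `1` on the entries of the lists, `x * ε x` is the list entry
among `x` and `-x`. Up to sign, `y^{ε(i)}(i)` is the successor of `i` in its cycle when `i` is an
entry, and the predecessor of `-i` when `-i` is one; the two outer factors `ε` of `bY` then
restore the sign with which `Y` acts. -/

theorem mul_apply_eq_of_abs_eq {R : Type*} [Ring R] [LinearOrder R] {ε : R → R}
    (hεodd : Function.Odd ε) {x b : R} (hxb : |x| = |b|) (hb : ε b = 1) :
    x * ε x = b := by
  rcases abs_eq_abs.mp hxb with rfl | rfl
  · rw [hb, mul_one]
  · rw [hεodd b, hb, neg_mul_neg, mul_one]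

theorem getD_mem {α : Type*} {l : List α} (x : α) {k : ℕ} (hk : k < l.length) :
    l.getD k x ∈ l := by
  rw [List.getD_eq_getElem _ _ hk]
  exact List.getElem_mem hk

theorem exists_getD_eq_of_mem {α : Type*} {l : List α} (x : α) {a : α} (ha : a ∈ l) :
    ∃ k < l.length, l.getD k x = a := by
  obtain ⟨k, hk, rfl⟩ := List.getElem_of_mem ha
  exact ⟨k, hk, List.getD_eq_getElem _ _ hk⟩

theorem exists_getD_succ_mod_length_eq_of_mem {α : Type*} {l : List α} (x : α) {a : α}
    (ha : a ∈ l) : ∃ k < l.length, l.getD ((k + 1) % l.length) x = a := by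
  obtain ⟨m, hm, rfl⟩ := exists_getD_eq_of_mem x ha
  have hpos : 0 < l.length := Nat.zero_lt_of_lt hm
  have hpred : ((m + (l.length - 1)) % l.length + 1) % l.length = m := by
    rw [Nat.mod_add_mod, add_assoc, Nat.sub_add_cancel hpos, Nat.add_mod_right,
      Nat.mod_eq_of_lt hm]
  exact ⟨(m + (l.length - 1)) % l.length, Nat.mod_lt _ hpos, by rw [hpred]⟩

theorem abs_sApp_s4 (y : Equiv.Perm ℤ) (s i : ℤ) : |sApp y s i| = |pApp y s (|i|)| := by
  unfold sApp
  split_ifs with hi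
  · rw [abs_of_pos hi]
  · rw [abs_neg, abs_of_nonpos (not_lt.mp hi)]

theorem abs_sApp_one {y : Equiv.Perm ℤ} {a b : ℤ} (hab : y |a| = |b|) : |sApp y 1 a| = |b| := by
  rw [abs_sApp_s4, pApp, if_pos rfl, hab, abs_abs]

theorem abs_sApp_neg_one {y : Equiv.Perm ℤ} {a b : ℤ} (hab : y |a| = |b|) :
    |sApp y (-1) b| = |a| := by
  rw [abs_sApp_s4, pApp, if_neg (by decide), ← hab, Equiv.symm_apply_apply, abs_abs]

section CycleStep

variable {y : Equiv.Perm ℤ} {ε : ℤ → ℤ} {a b : ℤ}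

theorem bY_eq_of_apply_abs_eq (hεodd : Function.Odd ε) (ha : ε a = 1) (hb : ε b = 1)
    (hab : y |a| = |b|) : bY y ε a = b := by
  rw [bY, ha, one_mul]
  exact mul_apply_eq_of_abs_eq hεodd (abs_sApp_one hab) hb

theorem bY_neg_eq_of_apply_abs_eq (hεodd : Function.Odd ε) (ha : ε a = 1) (hb : ε b = 1)
    (hab : y |a| = |b|) : bY y ε (-b) = -a := by
  have habs : |sApp y (-1) (-b)| = |a| := abs_sApp_neg_one (by rw [hab, abs_neg])
  rw [bY, hεodd b, hb, mul_assoc, mul_apply_eq_of_abs_eq hεodd habs ha, neg_one_mul]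

end CycleStep

theorem stmt4_general {ι : Type*} {L : ι → List ℤ} {Y : ℤ → ℤ}
    (hYcyc : ∀ j, ∀ k < (L j).length,
      Y ((L j).getD k 0) = (L j).getD ((k + 1) % (L j).length) 0
      ∧ Y (-((L j).getD ((k + 1) % (L j).length) 0)) = -((L j).getD k 0))
    {y : Equiv.Perm ℤ}
    (hycyc : ∀ j, ∀ k < (L j).length,
      y |(L j).getD k 0| = |(L j).getD ((k + 1) % (L j).length) 0|)
    {ε : ℤ → ℤ} (hεodd : Function.Odd ε) (hε : ∀ j, ∀ a ∈ L j, ε a = 1)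
    {i : ℤ} (hi : ∃ j, i ∈ L j ∨ -i ∈ L j) : Y i = bY y ε i := by
  obtain ⟨j, hentry | hneg⟩ := hi
  · obtain ⟨k, hk, rfl⟩ := exists_getD_eq_of_mem 0 hentry
    have hsucc := hε j _ (getD_mem 0 (Nat.mod_lt (k + 1) (Nat.zero_lt_of_lt hk)))
    rw [(hYcyc j k hk).1, bY_eq_of_apply_abs_eq hεodd (hε j _ hentry) hsucc (hycyc j k hk)]
  · obtain ⟨k, hk, hki⟩ := exists_getD_succ_mod_length_eq_of_mem 0 hneg
    have hpred := hε j _ (getD_mem 0 hk)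
    have hsucc := hε j _ hneg
    rw [← hki] at hsucc
    rw [← neg_neg i, ← hki, (hYcyc j k hk).2,
      bY_neg_eq_of_apply_abs_eq hεodd hpred hsucc (hycyc j k hk)]

/-- Lemma on restoring an origami from its double.  The permutation `Y` of `Î_d` is the
product of the disjoint cycles `c_j = (a_{j,1} … a_{j,m_j})` and
`c_j' = (-a_{j,1} … -a_{j,m_j})⁻¹`, where the lists `L j = (a_{j,1}, …, a_{j,m_j})`
have pairwise disjoint supports `supp(L j)`, `-supp(L j)` whose union is `Î_d`.
If `y` is the product of the cycles `(|a_{j,1}| … |a_{j,m_j}|)` and `ε` is the odd sign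
function with `ε = 1` on the entries of the lists, then `Y = 𝐲` on `Î_d`. -/
theorem stmt4 (d : ℤ) (hd : 1 ≤ d)
    (Y : Equiv.Perm ℤ) (hY : Set.BijOn Y (IdxHat d) (IdxHat d))
    (n : ℕ) (hn : 1 ≤ n) (L : Fin n → List ℤ)
    (hne : ∀ j, L j ≠ [])
    (hmem : ∀ j, ∀ a ∈ L j, a ∈ IdxHat d)
    (hnodup : ∀ j, (L j).Nodup)
    (hdisj₁ : ∀ j k : Fin n, ∀ a : ℤ, a ∈ L j → a ∈ L k → j = k)
    (hdisj₂ : ∀ j k : Fin n, ∀ a : ℤ, a ∈ L j → -a ∉ L k)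
    (hcover : ∀ i ∈ IdxHat d, ∃ j, i ∈ L j ∨ -i ∈ L j)
    (hYcyc : ∀ j : Fin n, ∀ k : ℕ, k < (L j).length →
      Y ((L j).getD k 0) = (L j).getD ((k + 1) % (L j).length) 0
      ∧ Y (-((L j).getD ((k + 1) % (L j).length) 0)) = -((L j).getD k 0))
    (y : Equiv.Perm ℤ) (hy : Set.BijOn y (Set.Icc 1 d) (Set.Icc 1 d))
    (hycyc : ∀ j : Fin n, ∀ k : ℕ, k < (L j).length →
      y (|(L j).getD k 0|) = |(L j).getD ((k + 1) % (L j).length) 0|)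
    (ε : ℤ → ℤ) (hεodd : ∀ i : ℤ, ε (-i) = -ε i)
    (hε : ∀ j : Fin n, ∀ a ∈ L j, ε a = 1) :
    ∀ i ∈ IdxHat d, Y i = bY y ε i :=
  fun i hi => stmt4_general hYcyc hycyc hεodd hε (hcover i hi)
end

section
/- Let d ≥ 1 and for j = 1, 2 let y_j be a permutation of I_d and ε_j : Î_d → {±1} an odd sign function, with associated maps 𝐲_j : Î_d → Î_d given by 𝐲_j(i) = ε_j(i) · y_j^{ε_j(i)}(i) · ε_j(y_j^{ε_j(i)}(i)). Let σ be an odd bijection of Î_d, with σ̄(i) = |σ(i)| and δ_σ(i) = sign(σ(i)) for i ∈ I_d. Then σ(𝐲_1(i)) = 𝐲_2(σ(i)) holds for all i ∈ Î_d if and only if the following two conditions hold for all i ∈ I_d: (3) η(i) · η(y_2(i)) = 1, where η(i) := δ_σ(σ̄^{−1}(i)) · ε_1(σ̄^{−1}(i)) · ε_2(i); (4) y_2(σ̄(i)) = σ̄(y_1^{δ_σ(i) · ε_1(i) · ε_2(σ̄(i))}(i)). -/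
/-!
Every point of `Î` can be written uniquely as `t · ε(i) · i` with `i ∈ I` and a sign `t`. In these
coordinates `𝐲` is the skew product `(t, i) ↦ (t, y^t(i))`, and `σ` is
`(t, i) ↦ (t · e(i), σ̄(i))` with `e(i) = δ_σ(i) ε₁(i) ε₂(σ̄(i))`. Hence `σ ∘ 𝐲₁ = 𝐲₂ ∘ σ` says that
`σ̄(y₁^t(i)) = y₂^(t e(i))(σ̄(i))` and `e(y₁^t(i)) = e(i)` for both signs `t`. The case `t = e(i)`
is condition (4) together with condition (3) at `σ̄(i)`, and the case `t = -e(i)` follows from it by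
running the bijection `σ̄⁻¹ y₂ σ̄` backwards.
-/

open Set

section SkewProduct

variable {α β : Type*} {S : Set α} {T : Set β} {s : α → β} {e : α → ℤ}

theorem forall_isUnit_zpow_iff {y₁ : Equiv.Perm α} {y₂ : Equiv.Perm β} (hy₁ : BijOn y₁ S S)
    (hy₂ : SurjOn y₂ T T) (hs : BijOn s S T) (he : ∀ i ∈ S, IsUnit (e i)) :
    (∀ t, IsUnit t → ∀ i ∈ S,
        s ((y₁ ^ t) i) = (y₂ ^ (t * e i)) (s i) ∧ e ((y₁ ^ t) i) = e i) ↔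
      ∀ i ∈ S, s ((y₁ ^ e i) i) = y₂ (s i) ∧ e ((y₁ ^ e i) i) = e i := by
  refine ⟨fun h i hi ↦ ?_, fun h t ht i hi ↦ ?_⟩
  · simpa only [Int.isUnit_mul_self (he i hi), zpow_one] using h (e i) (he i hi) i hi
  rcases Int.isUnit_eq_or_eq_neg ht (he i hi) with rfl | rfl
  · simpa only [Int.isUnit_mul_self (he i hi), zpow_one] using h i hi
  obtain ⟨j, hj, hji⟩ := hy₂ (hs.mapsTo hi)
  obtain ⟨m, hm, rfl⟩ := hs.surjOn hj
  obtain ⟨hsm, hem⟩ := h m hm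
  have him : (y₁ ^ e m) m = i :=
    hs.injOn ((hy₁.perm_zpow _).mapsTo hm) hi (hsm.trans hji)
  rw [him] at hem
  have hmi : (y₁ ^ (-e i)) i = m := by
    rw [hem, zpow_neg, Equiv.Perm.inv_eq_iff_eq, him]
  have hsi : (y₂ ^ (-e i * e i)) (s i) = s m := by
    rw [neg_mul, Int.isUnit_mul_self (he i hi), zpow_neg_one, Equiv.Perm.inv_eq_iff_eq, hji]
  rw [hmi, hsi]
  exact ⟨rfl, hem.symm⟩

theorem forall_semiconj_and_invariant_iff {f : α → α} {g : β → β} {r : β → α}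
    (hf : MapsTo f S S) (hs : MapsTo s S T) (hs' : SurjOn s S T) (hr : LeftInvOn r s S)
    (he : ∀ i ∈ S, IsUnit (e i)) :
    (∀ i ∈ S, s (f i) = g (s i) ∧ e (f i) = e i) ↔
      (∀ j ∈ T, e (r j) * e (r (g j)) = 1) ∧ ∀ i ∈ S, g (s i) = s (f i) := by
  rw [hs'.forall hs, ← forall₂_and]
  refine forall₂_congr fun i hi ↦ ?_
  rw [and_comm, eq_comm (a := s (f i))]
  refine and_congr_left fun hgs ↦ ?_
  rw [hgs, hr hi, hr (hf hi)]
  exact ⟨fun h ↦ h ▸ Int.isUnit_mul_self (he _ (hf hi)), fun h ↦ (Int.eq_of_mul_eq_one h).symm⟩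

end SkewProduct

theorem isUnit_sign {n : ℤ} (hn : n ≠ 0) : IsUnit n.sign :=
  Int.isUnit_iff_natAbs_eq.2 (Int.natAbs_sign_of_ne_zero hn)

theorem abs_unit_mul {t : ℤ} (ht : IsUnit t) (n : ℤ) : |t * n| = |n| := by
  rw [abs_mul, Int.isUnit_iff_abs_eq.1 ht, one_mul]

theorem map_unit_mul_of_odd {f : ℤ → ℤ} (hf : f.Odd) {t : ℤ} (ht : IsUnit t) (n : ℤ) :
    f (t * n) = t * f n := by
  rcases Int.isUnit_iff.1 ht with rfl | rfl
  · simp only [one_mul]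
  · simp only [neg_one_mul, hf.eq]

section OddMaps

variable {G H : Type*} [AddCommGroup G] [LinearOrder G] [AddCommGroup H] [LinearOrder H]

theorem abs_map_abs_of_odd {f : G → H} (hf : f.Odd) (n : G) : |f (|n|)| = |f n| := by
  rcases abs_choice n with h | h <;> simp only [h, hf.eq, abs_neg]

theorem bijOn_abs_of_odd [IsOrderedAddMonoid G] [IsOrderedAddMonoid H] {f : G → H} (hf : f.Odd)
    {S : Set G} {T : Set H} (hS : ∀ i ∈ S, 0 < i) (hT : ∀ j ∈ T, 0 < j)
    (h : BijOn f (abs ⁻¹' S) (abs ⁻¹' T)) : BijOn (fun i ↦ |f i|) S T := by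
  have abs_mem {i : G} (hi : i ∈ S) : |i| ∈ S := by rwa [abs_of_pos (hS i hi)]
  refine ⟨fun i hi ↦ h.mapsTo (abs_mem hi), fun i hi j hj hij ↦ ?_, fun j hj ↦ ?_⟩
  · rcases abs_eq_abs.1 hij with hij | hij
    · exact h.injOn (abs_mem hi) (abs_mem hj) hij
    · have hneg : i = -j := by
        refine h.injOn (abs_mem hi) ?_ (hij.trans (hf j).symm)
        simpa only [mem_preimage, abs_neg] using abs_mem hj
      exact absurd (hS i hi) (hneg ▸ (neg_neg_of_pos (hS j hj)).not_gt)
  · have hj' : |j| = j := abs_of_pos (hT j hj)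
    obtain ⟨k, hk, rfl⟩ := h.surjOn (show |j| ∈ T by rwa [hj'])
    exact ⟨|k|, hk, (abs_map_abs_of_odd hf k).trans hj'⟩

end OddMaps

/-- The point of `Î` with coordinates `(t, i) ∈ {±1} × I` relative to the odd sign function `ε`.
The sign is scaled by `ε i` so that `𝐲` preserves the first coordinate. -/
def signedPt (ε : ℤ → ℤ) (t i : ℤ) : ℤ := t * ε i * i

/-- The sign `e(i) = δ_σ(i) · ε₁(i) · ε₂(σ̄(i))` by which `σ` changes the first coordinate of the
points over `i`; the paper's `η` is `e ∘ σ̄⁻¹`. -/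
def relSign (ε₁ ε₂ σ : ℤ → ℤ) (i : ℤ) : ℤ := (σ i).sign * ε₁ i * ε₂ |σ i|

theorem signedPt_inj {ε : ℤ → ℤ} {t u i j : ℤ} (ht : IsUnit t) (hu : IsUnit u) (hi : 0 < i)
    (hj : 0 < j) (hεi : IsUnit (ε i)) (hεj : IsUnit (ε j)) :
    signedPt ε t i = signedPt ε u j ↔ i = j ∧ t = u := by
  refine ⟨fun h ↦ ?_, fun ⟨hij, htu⟩ ↦ hij ▸ htu ▸ rfl⟩
  obtain rfl : i = j := by
    have habs := congrArg abs h
    rwa [signedPt, signedPt, abs_unit_mul (ht.mul hεi), abs_unit_mul (hu.mul hεj), abs_of_pos hi,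
      abs_of_pos hj] at habs
  exact ⟨rfl, mul_right_cancel₀ hεi.ne_zero (mul_right_cancel₀ hi.ne' h)⟩

theorem forall_abs_mem_iff_forall_signedPt {S : Set ℤ} (hS : ∀ i ∈ S, 0 < i) {ε : ℤ → ℤ}
    (hε : ∀ i ∈ S, IsUnit (ε i)) {p : ℤ → Prop} :
    (∀ k, |k| ∈ S → p k) ↔ ∀ t, IsUnit t → ∀ i ∈ S, p (signedPt ε t i) := by
  refine ⟨fun h t ht i hi ↦ h _ ?_, fun h k hk ↦ ?_⟩
  · rwa [signedPt, abs_unit_mul (ht.mul (hε i hi)), abs_of_pos (hS i hi)]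
  · have hεk := hε _ hk
    have hk_eq : signedPt ε (k.sign * ε |k|) |k| = k := by
      rw [signedPt, mul_assoc k.sign, Int.isUnit_mul_self hεk, mul_one, Int.sign_mul_abs]
    exact hk_eq ▸ h _ ((isUnit_sign (abs_pos.1 (hS _ hk))).mul hεk) _ hk

theorem pApp_eq_zpow {y : Equiv.Perm ℤ} {s : ℤ} (hs : IsUnit s) (i : ℤ) :
    pApp y s i = (y ^ s) i := by
  rcases Int.isUnit_iff.1 hs with rfl | rfl
  · rw [pApp, if_pos rfl, zpow_one]
  · rw [pApp, if_neg (by decide), zpow_neg_one, Equiv.Perm.inv_def]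

theorem sApp_unit_mul {y : Equiv.Perm ℤ} {s t i : ℤ} (hs : IsUnit s) (ht : IsUnit t)
    (hi : 0 < i) : sApp y s (t * i) = t * (y ^ s) i := by
  rw [← pApp_eq_zpow hs]
  rcases Int.isUnit_iff.1 ht with rfl | rfl
  · rw [one_mul, one_mul, sApp, if_pos hi]
  · rw [neg_one_mul, neg_one_mul, sApp, if_neg (by lia), neg_neg]

theorem bY_signedPt {y : Equiv.Perm ℤ} {ε : ℤ → ℤ} {t i : ℤ} (hε : ε.Odd) (ht : IsUnit t)
    (hεi : IsUnit (ε i)) (hi : 0 < i) :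
    bY y ε (signedPt ε t i) = signedPt ε t ((y ^ t) i) := by
  have hsign : ε (signedPt ε t i) = t := by
    rw [signedPt, map_unit_mul_of_odd hε (ht.mul hεi), mul_assoc, Int.isUnit_mul_self hεi, mul_one]
  have hpow : sApp y t (signedPt ε t i) = t * ε i * (y ^ t) i :=
    sApp_unit_mul ht (ht.mul hεi) hi
  rw [bY, hsign, hpow, map_unit_mul_of_odd hε (ht.mul hεi), signedPt]
  linear_combination t * ε ((y ^ t) i) * (y ^ t) i * Int.isUnit_mul_self (ht.mul hεi)

section Intertwining

variable {S T : Set ℤ} {ε₁ ε₂ σ : ℤ → ℤ} {y₁ y₂ : Equiv.Perm ℤ}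

theorem isUnit_relSign {i : ℤ} (hσi : σ i ≠ 0) (hε₁i : IsUnit (ε₁ i)) (hε₂i : IsUnit (ε₂ |σ i|)) :
    IsUnit (relSign ε₁ ε₂ σ i) :=
  ((isUnit_sign hσi).mul hε₁i).mul hε₂i

theorem map_signedPt {t i : ℤ} (hσ : σ.Odd) (ht : IsUnit t) (hε₁i : IsUnit (ε₁ i))
    (hε₂i : IsUnit (ε₂ |σ i|)) :
    σ (signedPt ε₁ t i) = signedPt ε₂ (t * relSign ε₁ ε₂ σ i) |σ i| := by
  rw [signedPt, signedPt, relSign, map_unit_mul_of_odd hσ (ht.mul hε₁i)]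
  linear_combination -(t * ε₁ i) * Int.sign_mul_abs (σ i) -
    t * ε₁ i * (σ i).sign * |σ i| * Int.isUnit_mul_self hε₂i

theorem forall_map_bY_eq_iff (hS : ∀ i ∈ S, 0 < i) (hT : ∀ j ∈ T, 0 < j)
    (hy₁ : BijOn y₁ S S) (hy₂ : BijOn y₂ T T) (hε₁odd : ε₁.Odd) (hε₁ : ∀ i ∈ S, IsUnit (ε₁ i))
    (hε₂odd : ε₂.Odd) (hε₂ : ∀ j ∈ T, IsUnit (ε₂ j)) (hσodd : σ.Odd)
    (hσ : MapsTo (fun i ↦ |σ i|) S T) :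
    (∀ k, |k| ∈ S → σ (bY y₁ ε₁ k) = bY y₂ ε₂ (σ k)) ↔
      ∀ t, IsUnit t → ∀ i ∈ S, |σ ((y₁ ^ t) i)| = (y₂ ^ (t * relSign ε₁ ε₂ σ i)) |σ i| ∧
        relSign ε₁ ε₂ σ ((y₁ ^ t) i) = relSign ε₁ ε₂ σ i := by
  rw [forall_abs_mem_iff_forall_signedPt hS hε₁]
  refine forall₂_congr fun t ht ↦ forall₂_congr fun i hi ↦ ?_
  have hunit {k : ℤ} (hk : k ∈ S) : IsUnit (t * relSign ε₁ ε₂ σ k) :=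
    ht.mul (isUnit_relSign (abs_pos.1 (hT _ (hσ hk))) (hε₁ k hk) (hε₂ _ (hσ hk)))
  have hy₁i : (y₁ ^ t) i ∈ S := (hy₁.perm_zpow t).mapsTo hi
  have hy₂i := (hy₂.perm_zpow (t * relSign ε₁ ε₂ σ i)).mapsTo (hσ hi)
  rw [bY_signedPt hε₁odd ht (hε₁ i hi) (hS i hi), map_signedPt hσodd ht (hε₁ i hi) (hε₂ _ (hσ hi)),
    map_signedPt hσodd ht (hε₁ _ hy₁i) (hε₂ _ (hσ hy₁i)),
    bY_signedPt hε₂odd (hunit hi) (hε₂ _ (hσ hi)) (hT _ (hσ hi)),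
    signedPt_inj (hunit hy₁i) (hunit hi) (hT _ (hσ hy₁i)) (hT _ hy₂i) (hε₂ _ (hσ hy₁i))
      (hε₂ _ hy₂i),
    mul_right_inj' ht.ne_zero]

theorem stmt8_general (hS : ∀ i ∈ S, 0 < i) (hT : ∀ j ∈ T, 0 < j)
    (hy₁ : BijOn y₁ S S) (hy₂ : BijOn y₂ T T) (hε₁odd : ε₁.Odd) (hε₁ : ∀ i ∈ S, IsUnit (ε₁ i))
    (hε₂odd : ε₂.Odd) (hε₂ : ∀ j ∈ T, IsUnit (ε₂ j)) (hσodd : σ.Odd)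
    (hσ : BijOn σ (abs ⁻¹' S) (abs ⁻¹' T)) {σbi : ℤ → ℤ}
    (hσbi : LeftInvOn σbi (fun i ↦ |σ i|) S) :
    (∀ k, |k| ∈ S → σ (bY y₁ ε₁ k) = bY y₂ ε₂ (σ k)) ↔
      (∀ j ∈ T, ((σ (σbi j)).sign * ε₁ (σbi j) * ε₂ j) *
          ((σ (σbi (y₂ j))).sign * ε₁ (σbi (y₂ j)) * ε₂ (y₂ j)) = 1) ∧
        ∀ i ∈ S, y₂ |σ i| = |σ (pApp y₁ ((σ i).sign * ε₁ i * ε₂ |σ i|) i)| := by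
  have hbar : BijOn (fun i ↦ |σ i|) S T := bijOn_abs_of_odd hσodd hS hT hσ
  have hunit : ∀ i ∈ S, IsUnit (relSign ε₁ ε₂ σ i) := fun i hi ↦
    isUnit_relSign (abs_pos.1 (hT _ (hbar.mapsTo hi))) (hε₁ i hi) (hε₂ _ (hbar.mapsTo hi))
  have hη {j : ℤ} (hj : j ∈ T) :
      (σ (σbi j)).sign * ε₁ (σbi j) * ε₂ j = relSign ε₁ ε₂ σ (σbi j) := by
    obtain ⟨i, hi, rfl⟩ := hbar.surjOn hj
    simp only [relSign, hσbi.eq hi]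
  rw [forall_map_bY_eq_iff hS hT hy₁ hy₂ hε₁odd hε₁ hε₂odd hε₂ hσodd hbar.mapsTo,
    forall_isUnit_zpow_iff hy₁ hy₂.surjOn hbar hunit,
    forall_semiconj_and_invariant_iff (fun i hi ↦ (hy₁.perm_zpow _).mapsTo hi) hbar.mapsTo
      hbar.surjOn hσbi hunit]
  refine and_congr (forall₂_congr fun j hj ↦ ?_) (forall₂_congr fun i hi ↦ ?_)
  · rw [hη hj, hη (hy₂.mapsTo hj)]
  · rw [← pApp_eq_zpow (hunit i hi), relSign]

end Intertwining

theorem forall_Icc_isUnit_of_forall_idxHat {d : ℤ} {ε : ℤ → ℤ}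
    (hε : ∀ i ∈ IdxHat d, ε i = 1 ∨ ε i = -1) : ∀ i ∈ Icc 1 d, IsUnit (ε i) := fun i hi ↦
  Int.isUnit_iff.2 (hε i ⟨hi.1.trans (le_abs_self i), (abs_of_pos hi.1).trans_le hi.2⟩)

/-- `σ ∘ 𝐲₁ = 𝐲₂ ∘ σ` on `Î_d` iff conditions (3) and (4) hold on `I_d`.
Here `σ̄ i = |σ i|`, `δ_σ i = sign (σ i)`, `σbi` is the inverse of the permutation `σ̄`
of `I_d`, and `η i = δ_σ(σ̄⁻¹ i) · ε₁(σ̄⁻¹ i) · ε₂ i`. -/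
theorem stmt8 (d : ℤ) (hd : 1 ≤ d)
    (y₁ y₂ : Equiv.Perm ℤ)
    (hy₁ : Set.BijOn y₁ (Set.Icc 1 d) (Set.Icc 1 d))
    (hy₂ : Set.BijOn y₂ (Set.Icc 1 d) (Set.Icc 1 d))
    (ε₁ ε₂ : ℤ → ℤ)
    (hε₁odd : ∀ i : ℤ, ε₁ (-i) = -ε₁ i) (hε₁ : ∀ i ∈ IdxHat d, ε₁ i = 1 ∨ ε₁ i = -1)
    (hε₂odd : ∀ i : ℤ, ε₂ (-i) = -ε₂ i) (hε₂ : ∀ i ∈ IdxHat d, ε₂ i = 1 ∨ ε₂ i = -1)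
    (σ : Equiv.Perm ℤ) (hσ : Set.BijOn σ (IdxHat d) (IdxHat d))
    (hσodd : ∀ i : ℤ, σ (-i) = -σ i)
    (σbi : ℤ → ℤ)
    (hσbi : ∀ i ∈ Set.Icc (1:ℤ) d, σbi (|σ i|) = i ∧ |σ (σbi i)| = i) :
    (∀ i ∈ IdxHat d, σ (bY y₁ ε₁ i) = bY y₂ ε₂ (σ i))
    ↔ (∀ i ∈ Set.Icc (1:ℤ) d,
        (Int.sign (σ (σbi i)) * ε₁ (σbi i) * ε₂ i)
            * (Int.sign (σ (σbi (y₂ i))) * ε₁ (σbi (y₂ i)) * ε₂ (y₂ i)) = 1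
        ∧ y₂ (|σ i|) = |σ (pApp y₁ (Int.sign (σ i) * ε₁ i * ε₂ (|σ i|)) i)|) := by
  have hε₁' := forall_Icc_isUnit_of_forall_idxHat hε₁
  have hε₂' := forall_Icc_isUnit_of_forall_idxHat hε₂
  exact (stmt8_general (fun _ hi ↦ hi.1) (fun _ hi ↦ hi.1) hy₁ hy₂ hε₁odd hε₁' hε₂odd hε₂' hσodd hσ
    fun i hi ↦ (hσbi i hi).1).trans forall₂_and.symm
end
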